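/- Let α ∈ {−1,+1}. If x, v : ℝ → ℝ² are differentiable and satisfy the characteristic system x'(t) = v(t) and v'(t) = (α e β/(c m_α)) (v(t))⊥ for all t ∈ ℝ, then the three functions t ↦ E^α(x(t), v(t)), t ↦ L^α(x(t), v(t)) and t ↦ P^α(x(t), v(t)) are constant on ℝ. -/

import Mathlib

/-! Write `ω = α e β / (c m_α)` and `k = α c m_α / (e β)`; since `α² = 1`, `k ω = 1`. The speed is
conserved because `v⊥` is orthogonal to `v`. As `(v⊥)⊥ = -v`, the guiding centre `x + k v⊥` has
derivative `v - k ω v = 0`, so it is itself constant, and hence so is half its squared norm. The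
third quantity equals the second minus `k² |v|² / 2`, so it is constant too. -/

open Real MeasureTheory Set Filter

noncomputable section

/-- The rotation `v ↦ v⊥ = (v₂, -v₁)` on `ℝ²`. -/
def vperp (v : ℝ × ℝ) : ℝ × ℝ := (v.2, -v.1)

/-- The squared Euclidean norm on `ℝ²`. -/
def sqnorm (x : ℝ × ℝ) : ℝ := x.1 ^ 2 + x.2 ^ 2

/-- The Euclidean dot product on `ℝ²`. -/
def rdot (x y : ℝ × ℝ) : ℝ := x.1 * y.1 + x.2 * y.2

theorem eq_of_hasDerivAt_zero {f : ℝ → ℝ} (hf : ∀ t, HasDerivAt f 0 t) (t s : ℝ) : f t = f s :=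
  is_const_of_deriv_eq_zero (fun u => (hf u).differentiableAt) (fun u => (hf u).deriv) t s

/-- along any solution of the characteristic system
`x' = v`, `v' = (α e β/(c m_α)) v⊥`, the kinetic energy `E^α`, the quantity `L^α`
and the quantity `P^α` are constant. -/
theorem stmt0
    (e c β mminus mplus : ℝ) (he : 0 < e) (hc : 0 < c) (hβ : 0 < β)
    (hmm : 0 < mminus) (hmp : 0 < mplus)
    (α : ℝ) (hα : α = -1 ∨ α = 1)
    (mα : ℝ) (hmα : mα = if α = 1 then mplus else mminus)
    (x v : ℝ → ℝ × ℝ)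
    (hx : ∀ t : ℝ, HasDerivAt x (v t) t)
    (hv : ∀ t : ℝ, HasDerivAt v ((α * e * β / (c * mα)) • vperp (v t)) t) :
    (∀ t s : ℝ,
      (1/2) * mα * sqnorm (v t) = (1/2) * mα * sqnorm (v s)) ∧
    (∀ t s : ℝ,
      (1/2) * sqnorm (x t + (α * (c * mα / (e * β))) • vperp (v t))
        = (1/2) * sqnorm (x s + (α * (c * mα / (e * β))) • vperp (v s))) ∧
    (∀ t s : ℝ,
      (1/2) * sqnorm (x t) + α * (c * mα / (e * β)) * rdot (x t) (vperp (v t))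
        = (1/2) * sqnorm (x s) + α * (c * mα / (e * β)) * rdot (x s) (vperp (v s))) := by
  have hm : 0 < mα := by
    rw [hmα]; split_ifs <;> assumption
  have hα2 : α * α = 1 := by
    rcases hα with h | h <;> rw [h] <;> norm_num
  have hkω : α * (c * mα / (e * β)) * (α * e * β / (c * mα)) = 1 := by
    field_simp
    linarith
  generalize α * e * β / (c * mα) = ω at hv hkω
  generalize α * (c * mα / (e * β)) = k at hkω ⊢
  have hx1 : ∀ t, HasDerivAt (fun t => (x t).1) (v t).1 t := fun t => (hx t).fst
  have hx2 : ∀ t, HasDerivAt (fun t => (x t).2) (v t).2 t := fun t => (hx t).snd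
  have hv1 : ∀ t, HasDerivAt (fun t => (v t).1) (ω * (v t).2) t := fun t => (hv t).fst
  have hv2 : ∀ t, HasDerivAt (fun t => (v t).2) (ω * -(v t).1) t := fun t => (hv t).snd
  have speed : ∀ t s, (v t).1 ^ 2 + (v t).2 ^ 2 = (v s).1 ^ 2 + (v s).2 ^ 2 :=
    eq_of_hasDerivAt_zero fun t => by
      refine (((hv1 t).pow 2).add ((hv2 t).pow 2)).congr_deriv ?_
      push_cast
      ring
  have centre1 : ∀ t s, (x t).1 + k * (v t).2 = (x s).1 + k * (v s).2 :=
    eq_of_hasDerivAt_zero fun t => by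
      refine ((hx1 t).add ((hv2 t).const_mul k)).congr_deriv ?_
      linear_combination -(v t).1 * hkω
  have centre2 : ∀ t s, (x t).2 - k * (v t).1 = (x s).2 - k * (v s).1 :=
    eq_of_hasDerivAt_zero fun t => by
      refine ((hx2 t).sub ((hv1 t).const_mul k)).congr_deriv ?_
      linear_combination -(v t).2 * hkω
  have centre : ∀ t s, x t + k • vperp (v t) = x s + k • vperp (v s) := fun t s => by
    ext
    · simpa [vperp] using centre1 t s
    · simpa [vperp, sub_eq_add_neg] using centre2 t s
  refine ⟨fun t s => ?_, fun t s => by rw [centre t s], fun t s => ?_⟩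
  · simp only [sqnorm, speed t s]
  · have hL := congrArg sqnorm (centre t s)
    simp only [sqnorm, rdot, vperp, Prod.fst_add, Prod.snd_add, Prod.smul_fst, Prod.smul_snd,
      smul_eq_mul] at hL ⊢
    linear_combination hL / 2 - k ^ 2 / 2 * speed t s
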